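/- Let p ≥ 5 be a prime, g a generator of (ℤ/pℤ)ˣ, and define (S₀,S₁) in Z_{2(p−1)} = ℤ/2(p−1)ℤ by S₀ = {{2ℓ(x), 2ℓ(x−1)+1} : x ∈ (ℤ/pℤ)ˣ, x ≠ 1} and S₁ = {{2ℓ(x)+1, 2ℓ(y)+1} : x,y ∈ (ℤ/pℤ)ˣ \ {1, 2⁻¹}, x+y = 1} ∪ {{2ℓ(x), 2ℓ(y)} : x,y ∈ (ℤ/pℤ)ˣ \ {1, 2⁻¹}, x+y = 1} ∪ {{2r̄, 2r̄+1}}, where ℓ(x) ∈ {0,…,p−2} is the unique integer with g^{ℓ(x)} = x and r̄ ∈ {1,…,p−2} is the unique nonzero residue modulo p−1 not occurring in {{ℓ(x), ℓ(y)} : x,y ∈ (ℤ/pℤ)ˣ \ {1, 2⁻¹}, x+y = 1}. Then the induced column family C_i = {{x+2⌊ī/2⌋, y+2⌊ī/2⌋} : {x,y} ∈ S_{ī mod 2}} for i ∈ Z_{2(p−1)} satisfies the quasi-C-code condition: for all m ≠ k in Z_{2(p−1)}, C_m ∩ C_k = ∅, the simple graph on vertex set Z_{2(p−1)} with edge set C_m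 ∪ C_k contains no cycle, and m and k lie in different connected components of that graph. (This gives a quasi-C-code of length 2(p−1).) -/

import Mathlib

/-! Common definitions: C-codes, even starters, even 2-starters,
and bipyramidal (perfect) one-factorizations of the graph `G_{2n+2}`. -/

/-- Translate each unordered pair in `C` by `i`. -/
def shiftSet {m : ℕ} (i : ZMod m) (C : Set (Sym2 (ZMod m))) : Set (Sym2 (ZMod m)) :=
  (Sym2.map (· + i)) '' C

/-- `C` consists of `k` pairwise disjoint unordered pairs (2-element sets) of nonzero
elements of `ZMod m`. -/
def IsPairing (m k : ℕ) (C : Set (Sym2 (ZMod m))) : Prop :=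
  C.ncard = k ∧ (∀ e ∈ C, ¬ e.IsDiag) ∧ (∀ e ∈ C, (0 : ZMod m) ∉ e) ∧
    (∀ e ∈ C, ∀ e' ∈ C, e ≠ e' → ∀ a, a ∈ e → a ∉ e')

/-- The defining condition of a C-code with columns `C_i = i + C0`:
for all `a ≠ b`, the columns `C_a` and `C_b` are disjoint, the graph on `ZMod m`
with edge set `C_a ∪ C_b` has no cycle, and `a`, `b` are in different components. -/
def CCodeCond (m : ℕ) (C0 : Set (Sym2 (ZMod m))) : Prop :=
  ∀ a b : ZMod m, a ≠ b →
    shiftSet a C0 ∩ shiftSet b C0 = ∅ ∧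
    (SimpleGraph.fromEdgeSet (shiftSet a C0 ∪ shiftSet b C0)).IsAcyclic ∧
    ¬ (SimpleGraph.fromEdgeSet (shiftSet a C0 ∪ shiftSet b C0)).Reachable a b

/-- `C0` defines a C-code of length `2n`. -/
def IsCCode (n : ℕ) (C0 : Set (Sym2 (ZMod (2*n)))) : Prop :=
  IsPairing (2*n) (n-1) C0 ∧ CCodeCond (2*n) C0

/-- An even starter in `ZMod (2n)`. -/
def IsEvenStarter (n : ℕ) (S : Set (Sym2 (ZMod (2*n)))) : Prop :=
  IsPairing (2*n) (n-1) S ∧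
  ∀ i : ZMod (2*n), i ≠ 0 → i ≠ (n : ZMod (2*n)) →
    ∃ x y : ZMod (2*n), s(x, y) ∈ S ∧ (i = x - y ∨ i = y - x)

/-- An even starter in `ZMod m` for even `m`, phrased with `n = m / 2`. -/
def IsEvenStarterMod (m : ℕ) (S : Set (Sym2 (ZMod m))) : Prop :=
  IsPairing m (m / 2 - 1) S ∧
  ∀ i : ZMod m, i ≠ 0 → i ≠ ((m / 2 : ℕ) : ZMod m) →
    ∃ x y : ZMod m, s(x, y) ∈ S ∧ (i = x - y ∨ i = y - x)

/-- Vertices of `G_{2n+2}`: `Sum.inl i` for `i ∈ ZMod (2n)`, and `Sum.inr false = ∞₁`,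
`Sum.inr true = ∞₂`. -/
abbrev Vtx (n : ℕ) : Type := ZMod (2*n) ⊕ Bool

/-- The graph `G_{2n+2}`: all pairs of distinct vertices are adjacent except
`{∞₁, ∞₂}` and the pairs `{i, i+n}` for `i ∈ ZMod (2n)`. -/
def Ggraph (n : ℕ) : SimpleGraph (Vtx n) :=
  SimpleGraph.fromRel fun u v =>
    match u, v with
    | Sum.inl i, Sum.inl j => j ≠ i + (n : ZMod (2*n))
    | Sum.inl _, Sum.inr _ => True
    | Sum.inr _, Sum.inl _ => True
    | Sum.inr _, Sum.inr _ => False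

/-- The permutation `σ^i` (rotation by `i` on `ZMod (2n)`, fixing `∞₁` and `∞₂`). -/
def vshift (n : ℕ) (i : ZMod (2*n)) : Vtx n → Vtx n
  | Sum.inl x => Sum.inl (x + i)
  | Sum.inr b => Sum.inr b

/-- The involution swapping `∞₁` and `∞₂` and fixing all elements of `ZMod (2n)`. -/
def iotaSwap (n : ℕ) : Vtx n → Vtx n
  | Sum.inl x => Sum.inl x
  | Sum.inr b => Sum.inr (!b)

/-- `F` is a perfect matching (one-factor) of `G_{2n+2}`. -/
def IsOneFactor (n : ℕ) (F : Set (Sym2 (Vtx n))) : Prop :=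
  F ⊆ (Ggraph n).edgeSet ∧ ∀ v : Vtx n, ∃! e, e ∈ F ∧ v ∈ e

/-- A bipyramidal one-factorization of `G_{2n+2}`: `2n` pairwise edge-disjoint
one-factors whose union is the whole edge set, with `F i = σ^i (F 0)`. -/
def IsBipyramidalOF (n : ℕ) (F : ZMod (2*n) → Set (Sym2 (Vtx n))) : Prop :=
  (∀ i, IsOneFactor n (F i)) ∧ (∀ i j, i ≠ j → F i ∩ F j = ∅) ∧
    (⋃ i, F i) = (Ggraph n).edgeSet ∧
    ∀ i, F i = (Sym2.map (vshift n i)) '' (F 0)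

/-- The graph with edge set `E` is a Hamiltonian cycle: it is connected and every
vertex has degree 2. -/
def IsHamCycleOn {V : Type} (E : Set (Sym2 V)) : Prop :=
  (SimpleGraph.fromEdgeSet E).Connected ∧
    ∀ v : V, ((SimpleGraph.fromEdgeSet E).neighborSet v).ncard = 2

/-- A bipyramidal perfect one-factorization of `G_{2n+2}`. -/
def IsBipyramidalP1F (n : ℕ) (F : ZMod (2*n) → Set (Sym2 (Vtx n))) : Prop :=
  IsBipyramidalOF n F ∧ ∀ j k, j ≠ k → IsHamCycleOn (F j ∪ F k)

/-- An even starter in the multiplicative group `(ZMod p)ˣ`. -/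
def IsMulEvenStarter (p : ℕ) (S : Set (Sym2 ((ZMod p)ˣ))) : Prop :=
  S.ncard = (p - 3) / 2 ∧ (∀ e ∈ S, ¬ e.IsDiag) ∧ (∀ e ∈ S, (1 : (ZMod p)ˣ) ∉ e) ∧
    (∀ e ∈ S, ∀ e' ∈ S, e ≠ e' → ∀ a, a ∈ e → a ∉ e') ∧
    ∀ u : (ZMod p)ˣ, u ≠ 1 → u ≠ -1 →
      ∃ x y : (ZMod p)ˣ, s(x, y) ∈ S ∧ (u = x⁻¹ * y ∨ u = x * y⁻¹)

/-- The number of pairs in `S` whose difference (in either order) is `d`. -/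
noncomputable def diffCount (m : ℕ) (d : ℕ) (S : Set (Sym2 (ZMod m))) : ℕ :=
  {e ∈ S | ∃ x y : ZMod m, e = s(x, y) ∧
    (y - x = (d : ZMod m) ∨ x - y = (d : ZMod m))}.ncard

/-- `(S0, S1)` is an even 2-starter in `ZMod (2n)`: each `Sᵢ` consists of `n-1`
unordered pairs of elements of `ZMod (2n) \ {i}`, and every `d` with `1 ≤ d ≤ n-1`
occurs exactly twice as a difference of a pair, counted over both sets. -/
def IsEven2Starter (n : ℕ) (S0 S1 : Set (Sym2 (ZMod (2*n)))) : Prop :=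
  S0.ncard = n - 1 ∧ S1.ncard = n - 1 ∧
    (∀ e ∈ S0, ¬ e.IsDiag) ∧ (∀ e ∈ S1, ¬ e.IsDiag) ∧
    (∀ e ∈ S0, (0 : ZMod (2*n)) ∉ e) ∧ (∀ e ∈ S1, (1 : ZMod (2*n)) ∉ e) ∧
    ∀ d : ℕ, 1 ≤ d → d ≤ n - 1 →
      diffCount (2*n) d S0 + diffCount (2*n) d S1 = 2

/-- The `i`-th column induced by `(S0, S1)`:
`C_i = {{x + 2⌊ī/2⌋, y + 2⌊ī/2⌋} : {x,y} ∈ S_{ī mod 2}}` where `ī = i.val`. -/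
def qCol (n : ℕ) (S0 S1 : Set (Sym2 (ZMod (2*n)))) (i : ZMod (2*n)) :
    Set (Sym2 (ZMod (2*n))) :=
  (Sym2.map (· + ((2 * (i.val / 2) : ℕ) : ZMod (2*n)))) ''
    (if i.val % 2 = 0 then S0 else S1)

/-- The quasi-C-code condition for the column family induced by `(S0, S1)`. -/
def QuasiCCodeCond (n : ℕ) (S0 S1 : Set (Sym2 (ZMod (2*n)))) : Prop :=
  ∀ a b : ZMod (2*n), a ≠ b →
    qCol n S0 S1 a ∩ qCol n S0 S1 b = ∅ ∧
    (SimpleGraph.fromEdgeSet (qCol n S0 S1 a ∪ qCol n S0 S1 b)).IsAcyclic ∧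
    ¬ (SimpleGraph.fromEdgeSet (qCol n S0 S1 a ∪ qCol n S0 S1 b)).Reachable a b

/-!
Send the vertex `v` of `ZMod (2 * (p - 1))` to `(g ^ (v / 2), v mod 2)` in `ZMod p × ZMod 2`. This
misses only the two points over `0`, turns translation by `2` into scaling by `g`, and turns the
column with index `a` into a part of the one-factor through `{(0, 1), a}` of a one-factorization of
the complete graph on `ZMod p × ZMod 2`. In suitable coordinates any two of these one-factors are
the reflections `x ↦ -x` and `x ↦ -x - 2` of `ZMod p`, exchanging two sheets, so that their union is
a Hamiltonian cycle. The vertices `a` and `b` are the two neighbours of `(0, 1)` on the cycle for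
columns `a` and `b`; deleting `(0, 0)` and `(0, 1)` leaves no cycle and separates them.
-/

open SimpleGraph Function

section Paths

variable {V α : Type*} {G : SimpleGraph V}

theorem mem_of_reachable_of_forall_adj {s : Set V} (hs : ∀ v w, G.Adj v w → v ∈ s → w ∈ s)
    {u v : V} (huv : G.Reachable u v) (hu : u ∈ s) : v ∈ s := by
  rw [reachable_iff_reflTransGen] at huv
  induction huv with
  | refl => exact hu
  | tail _ hvw ih => exact hs _ _ hvw ih

variable [LinearOrder α]

theorem isAcyclic_hasse : (hasse α).IsAcyclic := by
  have not_reachable {a b : α} (hab : a ⋖ b) :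
      ¬ ((hasse α).deleteEdges {s(a, b)}).Reachable a b := by
    intro hr
    refine hab.lt.not_ge (mem_of_reachable_of_forall_adj (s := Set.Iic a) ?_ hr le_rfl)
    rintro x y hxy (hx : x ≤ a)
    refine not_lt.1 fun hy : a < y ↦ ?_
    rw [deleteEdges_adj, hasse_adj] at hxy
    obtain ⟨hcov | hcov, hne⟩ := hxy
    · obtain rfl : x = a := hx.antisymm (not_lt.1 fun hlt ↦ hcov.2 hlt hy)
      exact hne (by rw [hcov.unique_right hab, Set.mem_singleton_iff])
    · exact (hcov.lt.trans_le hx).not_gt hy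
  rw [isAcyclic_iff_forall_isBridge]
  intro e he
  induction e with
  | _ a b =>
    rw [mem_edgeSet, hasse_adj] at he
    rw [isBridge_iff]
    rcases he with hab | hba
    · exact not_reachable hab
    · rw [Sym2.eq_swap]
      exact fun hr ↦ not_reachable hba hr.symm

theorem lt_of_reachable_of_notMem_range (φ : G →g hasse α) {d : α} (hd : d ∉ Set.range φ)
    {u v : V} (huv : G.Reachable u v) (hu : φ u < d) : φ v < d := by
  refine mem_of_reachable_of_forall_adj (s := {v | φ v < d}) (fun x y hxy hx ↦ ?_) huv hu
  rcases hasse_adj.1 (φ.map_adj hxy) with hcov | hcov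
  · exact (hcov.ge_of_gt hx).lt_of_ne fun hy ↦ hd ⟨y, hy⟩
  · exact hcov.lt.trans hx

end Paths

section Cycle

variable {V W : Type*} {N : ℕ}

theorem val_add_one_of_ne_zero [NeZero N] {x : ZMod N} (hx : x + 1 ≠ 0) :
    (x + 1).val = x.val + 1 := by
  have hcast : ((x.val + 1 : ℕ) : ZMod N) = x + 1 := by
    rw [Nat.cast_succ, ZMod.natCast_zmod_val]
  have hne : x.val + 1 ≠ N := fun h ↦ hx (by rw [← hcast, h, ZMod.natCast_self])
  have hlt := ZMod.val_lt x
  rw [← hcast, ZMod.val_cast_of_lt (by omega)]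

/-- A cycle with vertices `ZMod N`, cut open at the point `c` that the labelling `f` avoids: the
distance from `c` in the positive direction sends `G` into the path `0 - 1 - 2 - ⋯`. -/
def cutHom [NeZero N] (G : SimpleGraph V) (f : V → ZMod N) (c : ZMod N) (hc : ∀ v, f v ≠ c)
    (hf : ∀ v w, G.Adj v w → f w = f v + 1 ∨ f v = f w + 1) : G →g hasse ℕ where
  toFun v := (f v - c).val
  map_rel' {v w} hvw := by
    have val_succ {v w : V} (h : f w = f v + 1) : (f w - c).val = (f v - c).val + 1 := by
      have hshift : f w - c = f v - c + 1 := by rw [h]; ring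
      rw [hshift, val_add_one_of_ne_zero (hshift ▸ sub_ne_zero.2 (hc w))]
    rw [hasse_adj, Nat.covBy_iff_add_one_eq, Nat.covBy_iff_add_one_eq]
    exact (hf v w hvw).imp (fun h ↦ (val_succ h).symm) fun h ↦ (val_succ h).symm

theorem cutHom_apply [NeZero N] {G : SimpleGraph V} {f : V → ZMod N} {c : ZMod N}
    (hc : ∀ v, f v ≠ c) (hf : ∀ v w, G.Adj v w → f w = f v + 1 ∨ f v = f w + 1) (v : V) :
    cutHom G f c hc hf v = (f v - c).val :=
  rfl

theorem isAcyclic_of_adj_add_one [NeZero N] {G : SimpleGraph V} {f : V → ZMod N}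
    (hinj : Injective f) {c : ZMod N} (hc : ∀ v, f v ≠ c)
    (hf : ∀ v w, G.Adj v w → f w = f v + 1 ∨ f v = f w + 1) : G.IsAcyclic :=
  isAcyclic_hasse.comap (cutHom G f c hc hf)
    ((ZMod.val_injective N).comp ((sub_left_injective (b := c)).comp hinj))

theorem not_reachable_of_adj_add_one [NeZero N] {G : SimpleGraph V} {f : V → ZMod N}
    {c d : ZMod N} (hcd : c ≠ d) (hc : ∀ v, f v ≠ c) (hd : ∀ v, f v ≠ d)
    (hf : ∀ v w, G.Adj v w → f w = f v + 1 ∨ f v = f w + 1)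
    {u v : V} (hu : f u = c + 1) (hv : f v = c - 1) : ¬ G.Reachable u v := by
  intro huv
  have hgap (w : V) : (f w - c).val ≠ (d - c).val := fun h ↦
    hd w (sub_left_injective (ZMod.val_injective N h))
  have hpos : 0 < (d - c).val := ZMod.val_pos.2 (sub_ne_zero.2 hcd.symm)
  have hval_u : (f u - c).val = 1 := by
    have hone : (0 : ZMod N) + 1 ≠ 0 := fun h ↦ hc u (by rw [hu]; linear_combination h)
    rw [hu, add_sub_cancel_left, ← zero_add 1, val_add_one_of_ne_zero hone, ZMod.val_zero]
  have hval_v : (f v - c).val + 1 = N := by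
    rw [hv, sub_sub_cancel_left]
    cases N with
    | zero => exact absurd rfl (NeZero.ne 0)
    | succ n => rw [ZMod.val_neg_one]
  have hlt := lt_of_reachable_of_notMem_range (cutHom G f c hc hf) (d := (d - c).val)
    (fun ⟨w, hw⟩ ↦ hgap w hw) huv
    (by rw [cutHom_apply, hval_u]; exact lt_of_le_of_ne hpos fun h ↦ hgap u (hval_u.trans h))
  rw [cutHom_apply] at hlt
  have hval_d := ZMod.val_lt (d - c)
  omega

/-- The edges of the one-factor that the fixed-point-free involution `σ` describes. -/
def matching (σ : W → W) : Set (Sym2 W) :=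
  Set.range fun w ↦ s(w, σ w)

theorem mk_mem_matching {σ : W → W} {v w : W} (h : σ v = w) : s(v, w) ∈ matching σ :=
  ⟨v, congrArg (s(v, ·)) h⟩

/-- Labels from `ZMod N` that exhibit the union of the one-factors of `σ` and `τ` as part of a
cycle of length `N`: at each vertex `σ` and `τ` step to the two neighbouring labels. -/
structure IsCyclicLabelling (σ τ : W → W) (f : W → ZMod N) : Prop where
  injective : Injective f
  step : ∀ w, (f (σ w) = f w + 1 ∧ f (τ w) = f w - 1) ∨ (f (σ w) = f w - 1 ∧ f (τ w) = f w + 1)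

namespace IsCyclicLabelling

variable {σ τ : W → W} {f : W → ZMod N}

theorem symm (hf : IsCyclicLabelling σ τ f) : IsCyclicLabelling τ σ f :=
  ⟨hf.injective, fun w ↦ (hf.step w).symm.imp And.symm And.symm⟩

theorem apply_ne (hf : IsCyclicLabelling σ τ f) (hN : 2 < N) (w : W) : σ w ≠ τ w := by
  have : Fact (2 < N) := ⟨hN⟩
  intro h
  apply ZMod.neg_one_ne_one (n := N)
  rcases hf.step w with ⟨hσ, hτ⟩ | ⟨hσ, hτ⟩ <;> rw [h] at hσ
  · linear_combination hσ - hτ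
  · linear_combination hτ - hσ

theorem disjoint_matching (hf : IsCyclicLabelling σ τ f) (hN : 2 < N) (hσ : Involutive σ) :
    Disjoint (matching σ) (matching τ) := by
  rw [Set.disjoint_left]
  rintro _ ⟨v, rfl⟩ ⟨w, hw⟩
  rcases Sym2.eq_iff.1 hw with ⟨rfl, h⟩ | ⟨rfl, h⟩
  · exact hf.apply_ne hN w h.symm
  · exact hf.apply_ne hN (σ v) (by rw [hσ v, h])

theorem eq_add_one_of_mem (hf : IsCyclicLabelling σ τ f) {v w : W}
    (h : s(v, w) ∈ matching σ ∪ matching τ) : f w = f v + 1 ∨ f v = f w + 1 := by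
  have swap {x y : ZMod N} (h : x = y - 1) : y = x + 1 := by rw [h, sub_add_cancel]
  rcases h with ⟨x, hx⟩ | ⟨x, hx⟩ <;> rcases Sym2.eq_iff.1 hx with ⟨rfl, rfl⟩ | ⟨rfl, rfl⟩ <;>
    rcases hf.step x with ⟨hσ, hτ⟩ | ⟨hσ, hτ⟩
  all_goals first | exact .inl ‹_› | exact .inr ‹_› | exact .inl (swap ‹_›) | exact .inr (swap ‹_›)

variable [NeZero N] {ι : V → W} {G : SimpleGraph V}

theorem isAcyclic (hf : IsCyclicLabelling σ τ f) (hι : Injective ι) {z : W} (hz : ∀ v, ι v ≠ z)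
    (hG : ∀ v w, G.Adj v w → s(ι v, ι w) ∈ matching σ ∪ matching τ) : G.IsAcyclic :=
  isAcyclic_of_adj_add_one (hf.injective.comp hι) (fun v ↦ hf.injective.ne (hz v))
    fun v w hvw ↦ hf.eq_add_one_of_mem (hG v w hvw)

theorem not_reachable (hf : IsCyclicLabelling σ τ f) {z z' : W} (hzz' : z ≠ z')
    (hz : ∀ v, ι v ≠ z) (hz' : ∀ v, ι v ≠ z')
    (hG : ∀ v w, G.Adj v w → s(ι v, ι w) ∈ matching σ ∪ matching τ)
    {a b : V} (ha : ι a = σ z) (hb : ι b = τ z) : ¬ G.Reachable a b := by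
  have separated {u v : V} (hu : f (ι u) = f z + 1) (hv : f (ι v) = f z - 1) :
      ¬ G.Reachable u v :=
    not_reachable_of_adj_add_one (f := f ∘ ι) (hf.injective.ne hzz')
      (fun v ↦ hf.injective.ne (hz v)) (fun v ↦ hf.injective.ne (hz' v))
      (fun v w hvw ↦ hf.eq_add_one_of_mem (hG v w hvw)) hu hv
  rcases hf.step z with ⟨hσ, hτ⟩ | ⟨hσ, hτ⟩ <;> rw [← ha] at hσ <;> rw [← hb] at hτ
  · exact separated hσ hτ
  · exact fun hr ↦ separated hτ hσ hr.symm

end IsCyclicLabelling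

end Cycle

section Dihedral

variable {V : Type*} {n : ℕ}

theorem zmod_two_eq_zero_or_eq_one (q : ZMod 2) : q = 0 ∨ q = 1 := by
  decide +revert

/-- Coordinates in which the involutions `σ` and `τ` become the reflections `x ↦ -x` and
`x ↦ -x - 2` of `ZMod n`, each of them also exchanging the two sheets indexed by `ZMod 2`. -/
structure IsDihedralCoord (σ τ : V → V) (h : V → ZMod n × ZMod 2) : Prop where
  injective : Injective h
  apply_left : ∀ w, h (σ w) = (-(h w).1, (h w).2 + 1)
  apply_right : ∀ w, h (τ w) = (-(h w).1 - 2, (h w).2 + 1)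

/-- The Hamiltonian cycle alternating between the reflections `x ↦ -x` and `x ↦ -x - 2`: along it,
the first coordinate advances by one if the sheets are oriented oppositely. -/
def unfoldSheets (w : ZMod n × ZMod 2) : ZMod n × ZMod 2 :=
  (if w.2 = 0 then w.1 else -w.1 - 1, w.2)

theorem unfoldSheets_injective : Injective (unfoldSheets (n := n)) := by
  rintro ⟨x, q⟩ ⟨x', q'⟩ h
  obtain rfl : q = q' := congrArg Prod.snd h
  have h1 := congrArg Prod.fst h
  dsimp only [unfoldSheets] at h1
  split_ifs at h1
  · rw [h1]
  · rw [neg_injective (sub_left_injective h1)]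

theorem unfoldSheets_reflections (x : ZMod n) (q : ZMod 2) :
    (unfoldSheets (-x, q + 1) = unfoldSheets (x, q) + 1 ∧
      unfoldSheets (-x - 2, q + 1) = unfoldSheets (x, q) - 1) ∨
    (unfoldSheets (-x, q + 1) = unfoldSheets (x, q) - 1 ∧
      unfoldSheets (-x - 2, q + 1) = unfoldSheets (x, q) + 1) := by
  have unfold_zero (y : ZMod n) : unfoldSheets (y, 0) = (y, 0) := rfl
  have unfold_one (y : ZMod n) : unfoldSheets (y, 1) = (-y - 1, 1) := rfl
  have one_add_one : (1 : ZMod 2) + 1 = 0 := CharTwo.add_self_eq_zero 1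
  have zero_sub_one : (0 : ZMod 2) - 1 = 1 := CharTwo.sub_eq_add 0 1
  simp only [Prod.ext_iff, Prod.fst_add, Prod.snd_add, Prod.fst_sub, Prod.snd_sub, Prod.fst_one,
    Prod.snd_one]
  rcases zmod_two_eq_zero_or_eq_one q with rfl | rfl
  · rw [zero_add, unfold_one, unfold_one, unfold_zero]
    exact .inr ⟨⟨by ring, zero_sub_one.symm⟩, by ring, (zero_add 1).symm⟩
  · rw [one_add_one, unfold_zero, unfold_zero, unfold_one]
    exact .inl ⟨⟨by ring, one_add_one.symm⟩, by ring, (sub_self 1).symm⟩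

theorem IsDihedralCoord.exists_isCyclicLabelling {σ τ : V → V} {h : V → ZMod n × ZMod 2}
    (hh : IsDihedralCoord σ τ h) (hn : Odd n) :
    ∃ f : V → ZMod (n * 2), IsCyclicLabelling σ τ f := by
  let e := (ZMod.chineseRemainder (Nat.coprime_two_right.2 hn)).symm
  refine ⟨e ∘ unfoldSheets ∘ h, e.injective.comp (unfoldSheets_injective.comp hh.injective),
    fun w ↦ ?_⟩
  simp only [comp_apply, hh.apply_left, hh.apply_right]
  rcases unfoldSheets_reflections (h w).1 (h w).2 with ⟨hσ, hτ⟩ | ⟨hσ, hτ⟩ <;>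
    simp only [hσ, hτ, Prod.mk.eta, map_add, map_sub, map_one, and_self, true_or, or_true]

end Dihedral

section Parity

variable {n : ℕ}

/-- The parity of the representative in `{0, …, n - 1}`. -/
def parity (s : ZMod n) : ZMod 2 := s.val

theorem parity_zero : parity (0 : ZMod n) = 0 := by
  rw [parity, ZMod.val_zero, Nat.cast_zero]

theorem parity_neg_one (hn : Odd n) : parity (-1 : ZMod n) = 0 := by
  cases n with
  | zero => simp at hn
  | succ m => rwa [parity, ZMod.val_neg_one, ZMod.natCast_eq_zero_iff_even, ← Nat.not_odd_iff_even,
      ← Nat.odd_add_one]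

theorem parity_add_one [NeZero n] {s : ZMod n} (hs : s + 1 ≠ 0) :
    parity (s + 1) = parity s + 1 := by
  rw [parity, parity, val_add_one_of_ne_zero hs, Nat.cast_succ]

theorem parity_neg [NeZero n] (hn : Odd n) {s : ZMod n} (hs : s ≠ 0) :
    parity (-s) = parity s + 1 := by
  have hcast : ((s.val + (-s).val : ℕ) : ZMod 2) = 1 := by
    rw [ZMod.neg_val, if_neg hs, Nat.add_sub_cancel' (ZMod.val_lt s).le]
    exact ZMod.natCast_eq_one_iff_odd.2 hn
  rw [Nat.cast_add] at hcast
  rw [parity, parity, ← hcast, ← add_assoc, CharTwo.add_self_eq_zero, zero_add]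

theorem parity_neg_sub_one [NeZero n] (hn : Odd n) (s : ZMod n) :
    parity (-s - 1) = parity s := by
  rcases eq_or_ne (s + 1) 0 with hs | hs
  · rw [show -s - 1 = 0 by linear_combination -hs, eq_neg_of_add_eq_zero_left hs,
      parity_neg_one hn, parity_zero]
  · rw [← neg_add', parity_neg hn hs, parity_add_one hs, add_assoc, CharTwo.add_self_eq_zero,
      add_zero]

theorem parity_neg_sub_two [NeZero n] (hn : Odd n) {s : ZMod n} (hs : s + 1 ≠ 0) :
    parity (-s - 2) = parity s + 1 := by
  rw [← parity_add_one hs, ← parity_neg_sub_one hn]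
  congr 1
  ring

end Parity

section Mate

/-- The action of the units on the first coordinate. -/
def scale {M : Type*} [Monoid M] (c : Mˣ) (w : M × ZMod 2) : M × ZMod 2 :=
  (c * w.1, w.2)

variable {R : Type*} [CommRing R] [DecidableEq R]

/-- The partner of `w` in the one-factor of the complete graph on `R × ZMod 2` attached to `a`, the
one in which `(0, 1)` and `a` are partners when `a.1 ≠ 0`. -/
def mate (a w : R × ZMod 2) : R × ZMod 2 :=
  if a.2 = 0 then if w.2 = 0 then (w.1 - a.1, 1) else (w.1 + a.1, 0)
  else if 2 * w.1 = a.1 then (w.1, w.2 + 1) else (a.1 - w.1, w.2)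

theorem mate_zero_apply_zero (a u : R) : mate (a, 0) (u, 0) = (u - a, 1) := by
  simp [mate]

theorem mate_zero_apply_one (a u : R) : mate (a, 0) (u, 1) = (u + a, 0) := by
  simp [mate]

theorem mate_one_of_eq {a u : R} (h : 2 * u = a) (e : ZMod 2) :
    mate (a, 1) (u, e) = (u, e + 1) := by
  simp [mate, h]

theorem mate_one_of_ne {a u : R} (h : 2 * u ≠ a) (e : ZMod 2) :
    mate (a, 1) (u, e) = (a - u, e) := by
  simp [mate, h]

theorem mate_involutive (a : R × ZMod 2) : Involutive (mate a) := by
  obtain ⟨a, i⟩ := a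
  rintro ⟨u, e⟩
  rcases zmod_two_eq_zero_or_eq_one i with rfl | rfl
  · rcases zmod_two_eq_zero_or_eq_one e with rfl | rfl
    · rw [mate_zero_apply_zero, mate_zero_apply_one, sub_add_cancel]
    · rw [mate_zero_apply_one, mate_zero_apply_zero, add_sub_cancel_right]
  · by_cases h : 2 * u = a
    · rw [mate_one_of_eq h, mate_one_of_eq h, add_assoc, CharTwo.add_self_eq_zero, add_zero]
    · have h' : 2 * (a - u) ≠ a := fun h' ↦ h (by linear_combination -h')
      rw [mate_one_of_ne h, mate_one_of_ne h', sub_sub_cancel]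

theorem mate_apply_zero_one {a : R × ZMod 2} (ha : a.1 ≠ 0) : mate a (0, 1) = a := by
  obtain ⟨a, i⟩ := a
  rcases zmod_two_eq_zero_or_eq_one i with rfl | rfl
  · rw [mate_zero_apply_one, zero_add]
  · rw [mate_one_of_ne (by simpa using ha.symm), sub_zero]

theorem mate_scale (c : Rˣ) (a w : R × ZMod 2) :
    mate (scale c a) (scale c w) = scale c (mate a w) := by
  obtain ⟨a, i⟩ := a
  obtain ⟨u, e⟩ := w
  simp only [scale, mate, ← mul_sub, ← mul_add, mul_left_comm 2 (c : R), Units.mul_right_inj]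
  split_ifs <;> rfl

theorem map_scale_mem_matching {a : R × ZMod 2} {e : Sym2 (R × ZMod 2)}
    (he : e ∈ matching (mate a)) (c : Rˣ) : e.map (scale c) ∈ matching (mate (scale c a)) := by
  obtain ⟨w, rfl⟩ := he
  exact mk_mem_matching (mate_scale c a w)

theorem mk_mem_matching_mate_zero {x y : R} (h : x = y + 1) :
    s((x, 0), (y, 1)) ∈ matching (mate ((1 : R), 0)) :=
  mk_mem_matching (by rw [mate_zero_apply_zero, h, add_sub_cancel_right])

theorem mk_mem_matching_mate_one {x y : R} (h : x + y = 1) (hx : 2 * x ≠ 1) (e : ZMod 2) :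
    s((x, e), (y, e)) ∈ matching (mate ((1 : R), 1)) :=
  mk_mem_matching (by rw [mate_one_of_ne hx, ← h, add_sub_cancel_left])

theorem mk_mem_matching_mate_one_of_two_mul_eq {x : R} (hx : 2 * x = 1) :
    s((x, 0), (x, 1)) ∈ matching (mate ((1 : R), 1)) :=
  mk_mem_matching (by rw [mate_one_of_eq hx, zero_add])

end Mate

section Prime

variable {p : ℕ} [Fact p.Prime] {a b c : ZMod p}

theorem exists_isDihedralCoord_mate_zero_zero (hp : p ≠ 2) (hab : a ≠ b) :
    ∃ h, IsDihedralCoord (n := p) (mate (a, 0)) (mate (b, 0)) h := by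
  have h2 : (2 : ZMod p) ≠ 0 := mod_cast ZMod.prime_ne_zero p 2 hp
  have hba : b - a ≠ 0 := sub_ne_zero.2 hab.symm
  let slope := -2 / (b - a)
  have hslope : slope ≠ 0 := div_ne_zero (neg_ne_zero.2 h2) hba
  have hslope_mul : slope * (b - a) = -2 := div_mul_cancel₀ _ hba
  refine ⟨fun w ↦ (if w.2 = 0 then slope * w.1 else -(slope * (w.1 + a)), w.2), ?_, ?_, ?_⟩
  · rintro ⟨u, e⟩ ⟨u', e'⟩ h
    obtain rfl : e = e' := congrArg Prod.snd h
    have h1 := congrArg Prod.fst h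
    dsimp only at h1
    split_ifs at h1
    · rw [mul_left_cancel₀ hslope h1]
    · rw [add_left_injective a (mul_left_cancel₀ hslope (neg_injective h1))]
  · rintro ⟨u, e⟩
    rcases zmod_two_eq_zero_or_eq_one e with rfl | rfl
    · simp [mate_zero_apply_zero]
    · simp [mate_zero_apply_one, CharTwo.add_self_eq_zero]
  · rintro ⟨u, e⟩
    rcases zmod_two_eq_zero_or_eq_one e with rfl | rfl
    · simp only [mate_zero_apply_zero, ↓reduceIte, one_ne_zero, zero_add, Prod.mk.injEq, and_true]
      linear_combination hslope_mul
    · simp only [mate_zero_apply_one, ↓reduceIte, one_ne_zero, CharTwo.add_self_eq_zero,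
        Prod.mk.injEq, and_true]
      linear_combination hslope_mul

/-- The coordinate `c * s` of the position `s` relative to the midpoint of `a`, measured in units
that may depend on the sheet. Adding the parity of `s` to the sheet makes every step of
`mate (a, 1)`, including the one at the midpoint `s = 0`, change the sheet. -/
def parityCoord (a c : ZMod p) (t : ZMod 2 → ZMod p) (w : ZMod p × ZMod 2) : ZMod p × ZMod 2 :=
  (c * (t w.2 * (a - 2 * w.1)), w.2 + parity (t w.2 * (a - 2 * w.1)))

theorem parityCoord_injective (hp : p ≠ 2) (hc : c ≠ 0) {t : ZMod 2 → ZMod p}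
    (ht : ∀ e, t e ≠ 0) : Injective (parityCoord a c t) := by
  have h2 : (2 : ZMod p) ≠ 0 := mod_cast ZMod.prime_ne_zero p 2 hp
  rintro ⟨u, e⟩ ⟨u', e'⟩ h
  have hpos : t e * (a - 2 * u) = t e' * (a - 2 * u') := mul_left_cancel₀ hc (congrArg Prod.fst h)
  have hsheet := congrArg Prod.snd h
  simp only [parityCoord, hpos, add_left_inj] at hsheet
  subst hsheet
  rw [mul_left_cancel₀ h2 (sub_right_injective (mul_left_cancel₀ (ht e) hpos))]

theorem parityCoord_mate_one (hp : p ≠ 2) {t : ZMod 2 → ZMod p}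
    (ht : ∀ e, t e ≠ 0) (w : ZMod p × ZMod 2) :
    parityCoord a c t (mate (a, 1) w) =
      (-(parityCoord a c t w).1, (parityCoord a c t w).2 + 1) := by
  obtain ⟨u, e⟩ := w
  by_cases h : 2 * u = a
  · simp [mate_one_of_eq h, parityCoord, h, parity_zero]
  · have hs : t e * (a - 2 * u) ≠ 0 := mul_ne_zero (ht e) (sub_ne_zero.2 (Ne.symm h))
    have hneg : t e * (a - 2 * (a - u)) = -(t e * (a - 2 * u)) := by ring
    rw [mate_one_of_ne h, parityCoord, parityCoord, hneg,
      parity_neg (Fact.out (p := p.Prime) |>.odd_of_ne_two hp) hs, mul_neg, add_assoc]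

theorem exists_isDihedralCoord_mate_one_one (hp : p ≠ 2) (hab : a ≠ b) :
    ∃ h, IsDihedralCoord (n := p) (mate (a, 1)) (mate (b, 1)) h := by
  have hba : b - a ≠ 0 := sub_ne_zero.2 hab.symm
  have hodd := Fact.out (p := p.Prime) |>.odd_of_ne_two hp
  let t : ZMod 2 → ZMod p := fun _ ↦ (b - a)⁻¹
  have ht (e) : t e ≠ 0 := inv_ne_zero hba
  refine ⟨parityCoord a 1 t, parityCoord_injective hp one_ne_zero ht,
    parityCoord_mate_one hp ht, ?_⟩
  rintro ⟨u, e⟩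
  have hpos : t e * (a - 2 * u) + 1 = t e * (b - 2 * u) := by
    linear_combination -inv_mul_cancel₀ hba
  by_cases h : 2 * u = b
  · have hs : (b - a)⁻¹ * (a - 2 * u) = -1 :=
      eq_neg_of_add_eq_zero_left (hpos.trans (by rw [h, sub_self, mul_zero]))
    rw [mate_one_of_eq h, parityCoord, parityCoord, hs, parity_neg_one hodd]
    ext <;> ring
  · have hs : t e * (a - 2 * u) + 1 ≠ 0 := by
      rw [hpos]
      exact mul_ne_zero (ht e) (sub_ne_zero.2 (Ne.symm h))
    have hrefl : t e * (a - 2 * (b - u)) = -(t e * (a - 2 * u)) - 2 := by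
      linear_combination -2 * inv_mul_cancel₀ hba
    rw [mate_one_of_ne h, parityCoord, parityCoord, hrefl,
      parity_neg_sub_two hodd hs, one_mul, one_mul, add_assoc]

theorem exists_isDihedralCoord_mate_one_zero (hp : p ≠ 2) (hb : b ≠ 0) :
    ∃ h, IsDihedralCoord (n := p) (mate (a, 1)) (mate (b, 0)) h := by
  have h2 : (2 : ZMod p) ≠ 0 := mod_cast ZMod.prime_ne_zero p 2 hp
  have h2b : 2 * b ≠ 0 := mul_ne_zero h2 hb
  have hodd := Fact.out (p := p.Prime) |>.odd_of_ne_two hp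
  let t : ZMod 2 → ZMod p := fun e ↦ if e = 0 then (2 * b)⁻¹ else -(2 * b)⁻¹
  have t_zero : t 0 = (2 * b)⁻¹ := if_pos rfl
  have t_one : t 1 = -(2 * b)⁻¹ := if_neg one_ne_zero
  have ht (e) : t e ≠ 0 := by
    rcases zmod_two_eq_zero_or_eq_one e with rfl | rfl
    · rw [t_zero]
      exact inv_ne_zero h2b
    · rw [t_one]
      exact neg_ne_zero.2 (inv_ne_zero h2b)
  refine ⟨parityCoord a 2 t, parityCoord_injective hp h2 ht, parityCoord_mate_one hp ht, ?_⟩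
  rintro ⟨u, e⟩
  rcases zmod_two_eq_zero_or_eq_one e with rfl | rfl
  · have hrefl : t 1 * (a - 2 * (u - b)) = -(t 0 * (a - 2 * u)) - 1 := by
      rw [t_zero, t_one]
      linear_combination -inv_mul_cancel₀ h2b
    rw [mate_zero_apply_zero, parityCoord, parityCoord, hrefl, parity_neg_sub_one hodd]
    ext <;> ring
  · have hrefl : t 0 * (a - 2 * (u + b)) = -(t 1 * (a - 2 * u)) - 1 := by
      rw [t_zero, t_one]
      linear_combination -inv_mul_cancel₀ h2b
    rw [mate_zero_apply_one, parityCoord, parityCoord, hrefl, parity_neg_sub_one hodd]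
    ext
    · ring
    · linear_combination -CharTwo.add_self_eq_zero (1 : ZMod 2)

theorem exists_isCyclicLabelling_mate (hp : p ≠ 2) {a b : ZMod p × ZMod 2} (ha : a.1 ≠ 0)
    (hb : b.1 ≠ 0) (hab : a ≠ b) :
    ∃ f : ZMod p × ZMod 2 → ZMod (p * 2), IsCyclicLabelling (mate a) (mate b) f := by
  have hodd := Fact.out (p := p.Prime) |>.odd_of_ne_two hp
  obtain ⟨a, i⟩ := a
  obtain ⟨b, j⟩ := b
  rcases zmod_two_eq_zero_or_eq_one i with rfl | rfl <;>
    rcases zmod_two_eq_zero_or_eq_one j with rfl | rfl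
  · obtain ⟨h, hh⟩ := exists_isDihedralCoord_mate_zero_zero hp (ne_of_apply_ne (·, 0) hab)
    exact hh.exists_isCyclicLabelling hodd
  · obtain ⟨h, hh⟩ := exists_isDihedralCoord_mate_one_zero (a := b) hp ha
    exact (hh.exists_isCyclicLabelling hodd).imp fun _ ↦ IsCyclicLabelling.symm
  · obtain ⟨h, hh⟩ := exists_isDihedralCoord_mate_one_zero (a := a) hp hb
    exact hh.exists_isCyclicLabelling hodd
  · obtain ⟨h, hh⟩ := exists_isDihedralCoord_mate_one_one hp (ne_of_apply_ne (·, 1) hab)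
    exact hh.exists_isCyclicLabelling hodd

end Prime

section Label

variable {M : Type*} [Monoid M] {g : Mˣ} {n : ℕ}

/-- The vertex `v` of `ZMod (2 * n)`, in the coordinates in which translation by `2` multiplies the
first entry by `g` and the second entry is the parity. -/
def label (g : Mˣ) (v : ZMod (2 * n)) : M × ZMod 2 :=
  (↑(g ^ (v.val / 2)), v.val)

theorem label_eq_scale (g : Mˣ) (v : ZMod (2 * n)) :
    label g v = scale (g ^ (v.val / 2)) (1, (v.val : ZMod 2)) := by
  rw [label, scale, mul_one]

theorem label_natCast (hg : g ^ n = 1) (k : ℕ) :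
    label g (k : ZMod (2 * n)) = (↑(g ^ (k / 2)), (k : ZMod 2)) := by
  have hdiv : k / 2 = n * (k / (2 * n)) + k % (2 * n) / 2 := by
    have := Nat.div_add_mod k (2 * n)
    rw [mul_assoc] at this
    omega
  have hcast : ((k % (2 * n) : ℕ) : ZMod 2) = k := by
    rw [ZMod.natCast_eq_natCast_iff]
    exact (Nat.mod_modEq k (2 * n)).of_mul_right n
  rw [label, ZMod.val_natCast, hcast, hdiv, pow_add, pow_mul, hg, one_pow, one_mul]

theorem label_two_mul (hg : g ^ n = 1) (k : ℕ) :
    label g ((2 * k : ℕ) : ZMod (2 * n)) = (↑(g ^ k), 0) := by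
  rw [label_natCast hg, Nat.mul_div_cancel_left k two_pos,
    (ZMod.natCast_eq_zero_iff (2 * k) 2).2 (dvd_mul_right 2 k)]

theorem label_two_mul_add_one (hg : g ^ n = 1) (k : ℕ) :
    label g ((2 * k + 1 : ℕ) : ZMod (2 * n)) = (↑(g ^ k), 1) := by
  have hdiv : (2 * k + 1) / 2 = k := by omega
  rw [label_natCast hg, hdiv, ZMod.natCast_eq_one_iff_odd.2 (odd_two_mul_add_one k)]

variable [NeZero n]

theorem label_add_two_mul (hg : g ^ n = 1) (v : ZMod (2 * n)) (k : ℕ) :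
    label g (v + ((2 * k : ℕ) : ZMod (2 * n))) = scale (g ^ k) (label g v) := by
  have hcast : ((v.val + 2 * k : ℕ) : ZMod 2) = v.val := by
    rw [Nat.cast_add, (ZMod.natCast_eq_zero_iff (2 * k) 2).2 (dvd_mul_right 2 k), add_zero]
  rw [← ZMod.natCast_zmod_val v, ← Nat.cast_add, label_natCast hg, label_natCast hg, hcast,
    Nat.add_mul_div_left _ _ two_pos, add_comm, pow_add, scale, Units.val_mul]

theorem label_injective (hg : orderOf g = n) :
    Injective (label g : ZMod (2 * n) → M × ZMod 2) := by
  intro v w h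
  have hv := ZMod.val_lt v
  have hw := ZMod.val_lt w
  have hparity : v.val % 2 = w.val % 2 :=
    (ZMod.natCast_eq_natCast_iff _ _ _).1 (congrArg Prod.snd h)
  have hhalf : v.val / 2 = w.val / 2 := pow_injOn_Iio_orderOf (x := g)
    (by rw [hg, Set.mem_Iio]; omega) (by rw [hg, Set.mem_Iio]; omega)
    (Units.ext (congrArg Prod.fst h))
  exact ZMod.val_injective _ (by omega)

end Label

section QuasiCCode

theorem map_label_mem_matching_of_mem_qCol {R : Type*} [CommRing R] [DecidableEq R] {n : ℕ}
    [NeZero n] {g : Rˣ} (hg : g ^ n = 1) {S₀ S₁ : Set (Sym2 (ZMod (2 * n)))}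
    (hS₀ : ∀ e ∈ S₀, e.map (label g) ∈ matching (mate (1, 0)))
    (hS₁ : ∀ e ∈ S₁, e.map (label g) ∈ matching (mate (1, 1)))
    {i : ZMod (2 * n)} {e : Sym2 (ZMod (2 * n))} (he : e ∈ qCol n S₀ S₁ i) :
    e.map (label g) ∈ matching (mate (label g i)) := by
  obtain ⟨e, he, rfl⟩ := he
  have hshift : label g ∘ (· + ((2 * (i.val / 2) : ℕ) : ZMod (2 * n))) =
      scale (g ^ (i.val / 2)) ∘ label g :=
    funext fun v ↦ label_add_two_mul hg v _
  rw [Sym2.map_map, hshift, ← Sym2.map_map, label_eq_scale g i]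
  refine map_scale_mem_matching ?_ _
  split_ifs at he with hi
  · rw [(ZMod.natCast_eq_zero_iff i.val 2).2 (Nat.dvd_of_mod_eq_zero hi)]
    exact hS₀ e he
  · rw [ZMod.natCast_eq_one_iff_odd.2 (Nat.odd_iff.2 (Nat.mod_two_ne_zero.1 hi))]
    exact hS₁ e he

theorem quasiCCodeCond_of_map_label_mem_matching {p : ℕ} [Fact p.Prime] (hp : p ≠ 2)
    {g : (ZMod p)ˣ} (hg : orderOf g = p - 1) {S₀ S₁ : Set (Sym2 (ZMod (2 * (p - 1))))}
    (hS₀ : ∀ e ∈ S₀, e.map (label g) ∈ matching (mate (1, 0)))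
    (hS₁ : ∀ e ∈ S₁, e.map (label g) ∈ matching (mate (1, 1))) :
    QuasiCCodeCond (p - 1) S₀ S₁ := by
  have hp_two : 2 ≤ p := Fact.out (p := p.Prime) |>.two_le
  have : NeZero (p - 1) := ⟨by omega⟩
  have hpow : g ^ (p - 1) = 1 := hg ▸ pow_orderOf_eq_one g
  have hinj := label_injective hg
  have label_fst_ne (v : ZMod (2 * (p - 1))) : (label g v).1 ≠ 0 := (g ^ (v.val / 2)).ne_zero
  have label_ne {z : ZMod p × ZMod 2} (hz : z.1 = 0) (v : ZMod (2 * (p - 1))) : label g v ≠ z :=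
    fun h ↦ label_fst_ne v (by rw [h, hz])
  intro a b hab
  obtain ⟨f, hf⟩ :=
    exists_isCyclicLabelling_mate hp (label_fst_ne a) (label_fst_ne b) (hinj.ne hab)
  have hG (v w) (hvw : (fromEdgeSet (qCol (p - 1) S₀ S₁ a ∪ qCol (p - 1) S₀ S₁ b)).Adj v w) :
      s(label g v, label g w) ∈ matching (mate (label g a)) ∪ matching (mate (label g b)) :=
    ((fromEdgeSet_adj _).1 hvw).1.imp (map_label_mem_matching_of_mem_qCol hpow hS₀ hS₁)
      (map_label_mem_matching_of_mem_qCol hpow hS₀ hS₁)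
  refine ⟨?_, hf.isAcyclic hinj (label_ne (z := (0, 1)) rfl) hG,
    hf.not_reachable (z := (0, 1)) (z' := (0, 0)) (by simp) (label_ne rfl) (label_ne rfl) hG
      (mate_apply_zero_one (label_fst_ne a)).symm (mate_apply_zero_one (label_fst_ne b)).symm⟩
  have hdisj := hf.disjoint_matching (by omega) (mate_involutive _)
  rw [← Set.disjoint_iff_inter_eq_empty, Set.disjoint_left]
  exact fun e hea heb ↦ Set.disjoint_left.1 hdisj
    (map_label_mem_matching_of_mem_qCol hpow hS₀ hS₁ hea)
    (map_label_mem_matching_of_mem_qCol hpow hS₀ hS₁ heb)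

end QuasiCCode

section Log

variable {K : Type*} [Field K]

theorem exists_units_add_eq_one (h2 : (2 : K) ≠ 0) {x : Kˣ} (hx1 : x ≠ 1) (hx2 : (x : K) ≠ 2⁻¹) :
    ∃ y : Kˣ, y ≠ 1 ∧ (y : K) ≠ 2⁻¹ ∧ (x : K) + y = 1 := by
  have hy0 : (1 : K) - x ≠ 0 := sub_ne_zero.2 fun h ↦ hx1 (Units.ext h.symm)
  refine ⟨Units.mk0 _ hy0, fun h ↦ x.ne_zero ?_, fun h ↦ hx2 ?_, add_sub_cancel _ _⟩
  · have hval : (1 : K) - x = 1 := congrArg Units.val h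
    linear_combination -hval
  · rw [Units.val_mk0] at h
    linear_combination -h - mul_inv_cancel₀ h2

theorem pow_eq_two_inv_of_forall_ne (h2 : (2 : K) ≠ 0) {g : Kˣ} {L : Kˣ → ℕ}
    (hL : ∀ x, L x < orderOf g ∧ g ^ L x = x) {r : ℕ} (hr0 : r ≠ 0) (hr : r < orderOf g)
    (hmiss : ∀ x y : Kˣ, x ≠ 1 → y ≠ 1 → (x : K) ≠ 2⁻¹ → (y : K) ≠ 2⁻¹ → (x : K) + y = 1 →
      r ≠ L x) :
    ((g ^ r : Kˣ) : K) = 2⁻¹ := by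
  by_contra hne
  have hlog : L (g ^ r) = r := pow_injOn_Iio_orderOf (hL _).1 hr (hL _).2
  obtain ⟨y, hy1, hy2, hadd⟩ := exists_units_add_eq_one h2 (pow_ne_one_of_lt_orderOf hr0 hr) hne
  exact hmiss _ y (pow_ne_one_of_lt_orderOf hr0 hr) hy1 hne hy2 hadd hlog.symm

end Log

/-- With `(S₀, S₁)` as in Statement 16, the induced column family
satisfies the quasi-C-code condition, giving a quasi-C-code of length `2(p-1)`. -/
theorem stmt17 (p : ℕ) [Fact p.Prime] (hp : 5 ≤ p)
    (g : (ZMod p)ˣ) (hg : ∀ u : (ZMod p)ˣ, u ∈ Subgroup.zpowers g)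
    (L : (ZMod p)ˣ → ℕ) (hL : ∀ x : (ZMod p)ˣ, L x ≤ p - 2 ∧ g ^ (L x) = x)
    (r : ℕ) (hr1 : 1 ≤ r) (hr2 : r ≤ p - 2)
    (hrmiss : ∀ x y : (ZMod p)ˣ,
      x ≠ 1 → y ≠ 1 → (x : ZMod p) ≠ (2 : ZMod p)⁻¹ → (y : ZMod p) ≠ (2 : ZMod p)⁻¹ →
      (x : ZMod p) + (y : ZMod p) = 1 → r ≠ L x ∧ r ≠ L y)
    (S0 S1 : Set (Sym2 (ZMod (2*(p-1)))))
    (hS0 : S0 = {e | ∃ x y : (ZMod p)ˣ, x ≠ 1 ∧ (x : ZMod p) = (y : ZMod p) + 1 ∧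
      e = s(((2 * L x : ℕ) : ZMod (2*(p-1))), ((2 * L y + 1 : ℕ) : ZMod (2*(p-1))))})
    (hS1 : S1 = {e | ∃ x y : (ZMod p)ˣ,
        (x ≠ 1 ∧ y ≠ 1 ∧ (x : ZMod p) ≠ (2 : ZMod p)⁻¹ ∧ (y : ZMod p) ≠ (2 : ZMod p)⁻¹ ∧
          (x : ZMod p) + (y : ZMod p) = 1) ∧
        (e = s(((2 * L x + 1 : ℕ) : ZMod (2*(p-1))), ((2 * L y + 1 : ℕ) : ZMod (2*(p-1)))) ∨
         e = s(((2 * L x : ℕ) : ZMod (2*(p-1))), ((2 * L y : ℕ) : ZMod (2*(p-1)))))} ∪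
      {s(((2 * r : ℕ) : ZMod (2*(p-1))), ((2 * r + 1 : ℕ) : ZMod (2*(p-1))))}) :
    QuasiCCodeCond (p - 1) S0 S1 := by
  have h2 : (2 : ZMod p) ≠ 0 := mod_cast ZMod.prime_ne_zero p 2 (by omega)
  have horder : orderOf g = p - 1 := by
    rw [orderOf_eq_card_of_forall_mem_zpowers hg, Nat.card_eq_fintype_card, ZMod.card_units]
  have hpow : g ^ (p - 1) = 1 := horder ▸ pow_orderOf_eq_one g
  have hgr : ((g ^ r : (ZMod p)ˣ) : ZMod p) = 2⁻¹ :=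
    pow_eq_two_inv_of_forall_ne h2 (fun x ↦ ⟨by have := (hL x).1; omega, (hL x).2⟩) (by omega)
      (by omega) fun x y hx1 hy1 hx2 hy2 hxy ↦ (hrmiss x y hx1 hy1 hx2 hy2 hxy).1
  have two_mul_ne {x : ZMod p} (hx : x ≠ 2⁻¹) : 2 * x ≠ 1 := fun h ↦
    hx (eq_inv_of_mul_eq_one_right h)
  refine quasiCCodeCond_of_map_label_mem_matching (by omega) horder ?_ ?_
  · rw [hS0]
    rintro _ ⟨x, y, -, hxy, rfl⟩
    rw [Sym2.map_mk, label_two_mul hpow, label_two_mul_add_one hpow, (hL x).2, (hL y).2]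
    exact mk_mem_matching_mate_zero hxy
  · rw [hS1]
    rintro _ (⟨x, y, ⟨-, -, hx, -, hxy⟩, rfl | rfl⟩ | rfl)
    · rw [Sym2.map_mk, label_two_mul_add_one hpow, label_two_mul_add_one hpow, (hL x).2, (hL y).2]
      exact mk_mem_matching_mate_one hxy (two_mul_ne hx) 1
    · rw [Sym2.map_mk, label_two_mul hpow, label_two_mul hpow, (hL x).2, (hL y).2]
      exact mk_mem_matching_mate_one hxy (two_mul_ne hx) 0
    · rw [Sym2.map_mk, label_two_mul hpow, label_two_mul_add_one hpow, hgr]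
      exact mk_mem_matching_mate_one_of_two_mul_eq (mul_inv_cancel₀ h2)
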